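/- Let Z be a real random variable with Z ~ N(0, σ²), σ > 0, and let α > 0. Then for every s > 0, P([1 + exp(2α) exp(−αZ²/σ²)]⁻¹ Z ≤ s) = 1/2 + P(0 ≤ Z ≤ g(s)) > P(Z ≤ s), where g is the inverse of the strictly increasing bijection h : [0,∞) → [0,∞), h(ξ) = ξ/(1 + exp(2α) exp(−αξ²/σ²)). -/

import Mathlib

open MeasureTheory Matrix Real Filter Topology ENNReal NNReal

noncomputable section

/-- Euclidean norm of a finite tuple. -/
def enorm2 {ι : Type*} [Fintype ι] (v : ι → ℝ) : ℝ := Real.sqrt (∑ i, v i ^ 2)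

/-- The `N(0, σ² I)` distribution on `ι → ℝ`, given by its Lebesgue density. -/
def gaussPi (ι : Type*) [Fintype ι] (σ2 : ℝ) : Measure (ι → ℝ) :=
  volume.withDensity fun x => ENNReal.ofReal
    ((2 * π * σ2) ^ (-(Fintype.card ι : ℝ) / 2) * Real.exp (-(enorm2 x) ^ 2 / (2 * σ2)))

/-- The Lebesgue density of the `N(0, σ² Q⁻¹)` distribution on `ι → ℝ`
(for `Q` symmetric positive definite). -/
def gaussCovDens {ι : Type*} [Fintype ι] [DecidableEq ι] (σ2 : ℝ) (Q : Matrix ι ι ℝ)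
    (x : ι → ℝ) : ℝ :=
  (2 * π * σ2) ^ (-(Fintype.card ι : ℝ) / 2) * Real.sqrt Q.det *
    Real.exp (-(x ⬝ᵥ Q.mulVec x) / (2 * σ2))

/-- The `N(0, σ² Q⁻¹)` distribution on `ι → ℝ` (for `Q` symmetric positive definite),
given by its Lebesgue density. -/
def gaussCov {ι : Type*} [Fintype ι] [DecidableEq ι] (σ2 : ℝ) (Q : Matrix ι ι ℝ) :
    Measure (ι → ℝ) :=
  volume.withDensity fun x => ENNReal.ofReal (gaussCovDens σ2 Q x)

open Classical in
/-- Symmetric positive semidefinite square root (junk value `0` off the psd cone). -/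
def msqrt {ι : Type*} [Fintype ι] [DecidableEq ι] (A : Matrix ι ι ℝ) : Matrix ι ι ℝ :=
  if h : A.PosSemidef then
    (h.isHermitian.eigenvectorUnitary : Matrix ι ι ℝ) *
      diagonal (Real.sqrt ∘ h.isHermitian.eigenvalues) *
      (star h.isHermitian.eigenvectorUnitary : Matrix ι ι ℝ)
  else 0

open Classical in
/-- Smallest eigenvalue of a symmetric matrix (junk value `0` otherwise). -/
def lamMin {ι : Type*} [Fintype ι] [DecidableEq ι] (A : Matrix ι ι ℝ) : ℝ :=
  if h : A.IsHermitian then ⨅ i, h.eigenvalues i else 0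

open Classical in
/-- Largest eigenvalue of a symmetric matrix (junk value `0` otherwise). -/
def lamMax {ι : Type*} [Fintype ι] [DecidableEq ι] (A : Matrix ι ι ℝ) : ℝ :=
  if h : A.IsHermitian then ⨆ i, h.eigenvalues i else 0

variable {n k₁ k₂ : ℕ}

/-- First block of columns of the design matrix. -/
def X1 (X : Matrix (Fin n) (Fin k₁ ⊕ Fin k₂) ℝ) : Matrix (Fin n) (Fin k₁) ℝ :=
  X.submatrix id Sum.inl

/-- Second block of columns of the design matrix. -/
def X2 (X : Matrix (Fin n) (Fin k₁ ⊕ Fin k₂) ℝ) : Matrix (Fin n) (Fin k₂) ℝ :=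
  X.submatrix id Sum.inr

/-- Unrestricted least squares estimator. -/
def betaU (X : Matrix (Fin n) (Fin k₁ ⊕ Fin k₂) ℝ) (Y : Fin n → ℝ) : (Fin k₁ ⊕ Fin k₂) → ℝ :=
  (Xᵀ * X)⁻¹.mulVec (Xᵀ.mulVec Y)

/-- Restricted least squares estimator. -/
def betaR (X : Matrix (Fin n) (Fin k₁ ⊕ Fin k₂) ℝ) (Y : Fin n → ℝ) : (Fin k₁ ⊕ Fin k₂) → ℝ :=
  Sum.elim (((X1 X)ᵀ * X1 X)⁻¹.mulVec ((X1 X)ᵀ.mulVec Y)) (fun _ => 0)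

/-- Risk estimate of the restricted model. -/
def rR (X : Matrix (Fin n) (Fin k₁ ⊕ Fin k₂) ℝ) (σ2 : ℝ) (Y : Fin n → ℝ) : ℝ :=
  Y ⬝ᵥ Y - betaR X Y ⬝ᵥ (Xᵀ * X).mulVec (betaR X Y) + σ2 * (2 * k₁ - n)

/-- Risk estimate of the unrestricted model. -/
def rU (X : Matrix (Fin n) (Fin k₁ ⊕ Fin k₂) ℝ) (σ2 : ℝ) (Y : Fin n → ℝ) : ℝ :=
  Y ⬝ᵥ Y - betaU X Y ⬝ᵥ (Xᵀ * X).mulVec (betaU X Y) + σ2 * (2 * (k₁ + k₂) - n)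

/-- The model averaging weight `λ̂`. -/
def lamHat (α σ2 : ℝ) (X : Matrix (Fin n) (Fin k₁ ⊕ Fin k₂) ℝ) (Y : Fin n → ℝ) : ℝ :=
  Real.exp (-(α * rR X σ2 Y) / σ2) /
    (Real.exp (-(α * rR X σ2 Y) / σ2) + Real.exp (-(α * rU X σ2 Y) / σ2))

/-- Leung and Barron's model averaging estimator `β̃`. -/
def mavg (α σ2 : ℝ) (X : Matrix (Fin n) (Fin k₁ ⊕ Fin k₂) ℝ) (Y : Fin n → ℝ) :
    (Fin k₁ ⊕ Fin k₂) → ℝ :=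
  lamHat α σ2 X Y • betaR X Y + (1 - lamHat α σ2 X Y) • betaU X Y

/-- Projection on the column space of `X₁`. -/
def projR (X : Matrix (Fin n) (Fin k₁ ⊕ Fin k₂) ℝ) : Matrix (Fin n) (Fin n) ℝ :=
  X1 X * ((X1 X)ᵀ * X1 X)⁻¹ * (X1 X)ᵀ

/-- Projection on the column space of `X`. -/
def projU (X : Matrix (Fin n) (Fin k₁ ⊕ Fin k₂) ℝ) : Matrix (Fin n) (Fin n) ℝ :=
  X * (Xᵀ * X)⁻¹ * Xᵀ

/-- The distribution `P_{n,β,σ}` of `Y = Xβ + u`, `u ~ N(0, σ² Iₙ)`. -/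
def Pmeas (X : Matrix (Fin n) (Fin k₁ ⊕ Fin k₂) ℝ) (β : (Fin k₁ ⊕ Fin k₂) → ℝ) (σ2 : ℝ) :
    Measure (Fin n → ℝ) :=
  (gaussPi (Fin n) σ2).map (fun u => X.mulVec β + u)

/-- The function `h_{a,b}(ξ) = ξ / (1 + a exp(−ξ²/b))`. -/
def hfun (a b ξ : ℝ) : ℝ := ξ / (1 + a * Real.exp (-ξ ^ 2 / b))

/-- The inverse `g_{a,b}` of `h_{a,b}`. -/
def gfun (a b : ℝ) : ℝ → ℝ := Function.invFun (hfun a b)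

open Classical in
/-- `g(‖w‖) w / ‖w‖`, with the convention that this is `0` for `w = 0`. -/
def gdir (a b : ℝ) {ι : Type*} [Fintype ι] (w : ι → ℝ) : ι → ℝ :=
  if w = 0 then 0 else (gfun a b (enorm2 w) / enorm2 w) • w


/-- The finite-sample density `f_{n,β,σ}` of `√n(β̃ − β)` (Theorem 3 of the paper). -/
def fdens {n k₁ k₂ : ℕ} (X : Matrix (Fin n) (Fin k₁ ⊕ Fin k₂) ℝ)
    (β : (Fin k₁ ⊕ Fin k₂) → ℝ) (σ2 α : ℝ) (t : (Fin k₁ ⊕ Fin k₂) → ℝ) : ℝ :=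
  let a := Real.exp (2 * α * k₂)
  let b := σ2 / α
  let S := (X2 X)ᵀ * (1 - projR X) * X2 X
  let w := (Real.sqrt n)⁻¹ • (msqrt S).mulVec ((t ∘ Sum.inr) + Real.sqrt n • (β ∘ Sum.inr))
  (2 * π * σ2) ^ (-((k₁ : ℝ) + k₂) / 2) * Real.sqrt (((n : ℝ)⁻¹ • (Xᵀ * X)).det) *
    Real.exp (-(enorm2 ((Real.sqrt n)⁻¹ •
        ((msqrt ((X1 X)ᵀ * X1 X)).mulVec (t ∘ Sum.inl) +
          ((msqrt ((X1 X)ᵀ * X1 X))⁻¹ * (X1 X)ᵀ * X2 X).mulVec (t ∘ Sum.inr)))) ^ 2 /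
      (2 * σ2)) *
    (1 + Real.exp (-(α / σ2) * gfun a b (enorm2 w) ^ 2 + 2 * α * k₂)) ^ (k₂ : ℕ) *
    (1 + (2 * α / σ2) * gfun a b (enorm2 w) ^ 2 *
        (1 + Real.exp ((α / σ2) * gfun a b (enorm2 w) ^ 2 - 2 * α * k₂))⁻¹)⁻¹ *
    Real.exp (-(enorm2 (gdir a b w - (msqrt S).mulVec (β ∘ Sum.inr))) ^ 2 / (2 * σ2))

/-- The density `f_{∞,γ}` of the limiting distribution (formula (13) of the paper),
stated for a general symmetric positive definite matrix in place of `Q`. -/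
def fInfty {k₁ k₂ : ℕ} (Q : Matrix (Fin k₁ ⊕ Fin k₂) (Fin k₁ ⊕ Fin k₂) ℝ) (σ2 α : ℝ)
    (γ : Fin k₂ → ℝ) (t : (Fin k₁ ⊕ Fin k₂) → ℝ) : ℝ :=
  let a := Real.exp (2 * α * k₂)
  let b := σ2 / α
  let S := Q.toBlocks₂₂ - Q.toBlocks₂₁ * Q.toBlocks₁₁⁻¹ * Q.toBlocks₁₂
  let w := (msqrt S).mulVec ((t ∘ Sum.inr) + γ)
  (2 * π * σ2) ^ (-((k₁ : ℝ) + k₂) / 2) * Real.sqrt Q.det *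
    Real.exp (-(enorm2 ((msqrt Q.toBlocks₁₁).mulVec (t ∘ Sum.inl) +
        ((msqrt Q.toBlocks₁₁)⁻¹ * Q.toBlocks₁₂).mulVec (t ∘ Sum.inr))) ^ 2 / (2 * σ2)) *
    (1 + Real.exp (-(α / σ2) * gfun a b (enorm2 w) ^ 2 + 2 * α * k₂)) ^ (k₂ : ℕ) *
    (1 + (2 * α / σ2) * gfun a b (enorm2 w) ^ 2 *
        (1 + Real.exp ((α / σ2) * gfun a b (enorm2 w) ^ 2 - 2 * α * k₂))⁻¹)⁻¹ *
    Real.exp (-(enorm2 (gdir a b w - (msqrt S).mulVec γ)) ^ 2 / (2 * σ2))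


/-- The limiting law (12): the distribution of
`B_∞γ + C_∞Z₁ + [1 + exp(2αk₂) exp(−α‖Z₂ + (Q₂₂ − Q₂₁Q₁₁⁻¹Q₁₂)^{1/2}γ‖²/σ²)]⁻¹
  · (D_∞Z₂ − B_∞γ)` with `Z₁ ~ N(0, σ²I_{k₁})`, `Z₂ ~ N(0, σ²I_{k₂})` independent. -/
def limitLaw {k₁ k₂ : ℕ} (Q : Matrix (Fin k₁ ⊕ Fin k₂) (Fin k₁ ⊕ Fin k₂) ℝ) (σ2 α : ℝ)
    (γ : Fin k₂ → ℝ) : Measure ((Fin k₁ ⊕ Fin k₂) → ℝ) :=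
  ((gaussPi (Fin k₁) σ2).prod (gaussPi (Fin k₂) σ2)).map
    (fun Z : (Fin k₁ → ℝ) × (Fin k₂ → ℝ) =>
      (fromRows (Q.toBlocks₁₁⁻¹ * Q.toBlocks₁₂) (-1)).mulVec γ +
      (fromRows (msqrt Q.toBlocks₁₁)⁻¹ 0).mulVec Z.1 +
      (1 + Real.exp (2 * α * k₂) *
          Real.exp (-α * (enorm2 (Z.2 +
            (msqrt (Q.toBlocks₂₂ - Q.toBlocks₂₁ * Q.toBlocks₁₁⁻¹ * Q.toBlocks₁₂)).mulVec
              γ)) ^ 2 / σ2))⁻¹ •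
        ((fromRows
            (-(Q.toBlocks₁₁⁻¹ * Q.toBlocks₁₂ *
              (msqrt (Q.toBlocks₂₂ - Q.toBlocks₂₁ * Q.toBlocks₁₁⁻¹ * Q.toBlocks₁₂))⁻¹))
            ((msqrt (Q.toBlocks₂₂ - Q.toBlocks₂₁ * Q.toBlocks₁₁⁻¹ * Q.toBlocks₁₂))⁻¹)).mulVec
            Z.2 -
          (fromRows (Q.toBlocks₁₁⁻¹ * Q.toBlocks₁₂) (-1)).mulVec γ))


/-!
The map `h = hfun a b` is odd, continuous and strictly increasing on all of `ℝ` and grows at least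
linearly, so `g = gfun a b` is its two-sided inverse and the event `h Z ≤ s` is just `Z ≤ g s`.
A symmetric law without an atom at `0` puts mass `1/2` on `(-∞, 0)`, which gives the formula for the
probability. Since `h` shrinks positive numbers, `s < g s`, and a law with full support charges
`(s, g s]`.
-/

section Shrinkage

variable {a b : ℝ}

lemma one_add_mul_exp_pos (ha : 0 ≤ a) (x : ℝ) : 0 < 1 + a * exp x := by positivity

lemma inv_one_add_mul_exp_mul_eq_hfun (a α v z : ℝ) :
    (1 + a * exp (-α * z ^ 2 / v))⁻¹ * z = hfun a (v / α) z := by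
  rw [hfun, inv_mul_eq_div, div_div_eq_mul_div, neg_mul_comm, mul_comm α]

lemma hfun_neg (a b ξ : ℝ) : hfun a b (-ξ) = -hfun a b ξ := by
  simp only [hfun, neg_sq, neg_div]

lemma continuous_hfun (ha : 0 ≤ a) (b : ℝ) : Continuous (hfun a b) :=
  continuous_id.div (by fun_prop) fun _ => (one_add_mul_exp_pos ha _).ne'

lemma strictMonoOn_hfun (ha : 0 ≤ a) (hb : 0 < b) : StrictMonoOn (hfun a b) (Set.Ici 0) := by
  intro x hx y hy hxy
  have h_denom : 1 + a * exp (-y ^ 2 / b) ≤ 1 + a * exp (-x ^ 2 / b) := by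
    have : 0 ≤ x := hx
    gcongr
  exact div_lt_div₀ hxy h_denom hy (one_add_mul_exp_pos ha _)

lemma strictMono_hfun (ha : 0 ≤ a) (hb : 0 < b) : StrictMono (hfun a b) :=
  strictMono_of_odd_strictMonoOn_nonneg (hfun_neg a b) (strictMonoOn_hfun ha hb)

lemma div_one_add_le_hfun (ha : 0 ≤ a) (hb : 0 < b) {ξ : ℝ} (hξ : 0 ≤ ξ) :
    ξ / (1 + a) ≤ hfun a b ξ := by
  have h_exp : exp (-ξ ^ 2 / b) ≤ 1 :=
    exp_le_one_iff.mpr (div_nonpos_of_nonpos_of_nonneg (neg_nonpos.mpr (sq_nonneg ξ)) hb.le)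
  exact div_le_div_of_nonneg_left hξ (one_add_mul_exp_pos ha _)
    (add_le_add_right (mul_le_of_le_one_right ha h_exp) 1)

lemma tendsto_hfun_atTop (ha : 0 ≤ a) (hb : 0 < b) : Tendsto (hfun a b) atTop atTop :=
  tendsto_atTop_mono' atTop
    ((eventually_ge_atTop 0).mono fun _ => div_one_add_le_hfun ha hb)
    (tendsto_id.atTop_div_const (by positivity))

lemma tendsto_hfun_atBot (ha : 0 ≤ a) (hb : 0 < b) : Tendsto (hfun a b) atBot atBot := by
  have h_neg : Tendsto (fun ξ => -hfun a b (-ξ)) atBot atBot :=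
    tendsto_neg_atTop_atBot.comp ((tendsto_hfun_atTop ha hb).comp tendsto_neg_atBot_atTop)
  simpa only [hfun_neg, neg_neg] using h_neg

lemma surjective_hfun (ha : 0 ≤ a) (hb : 0 < b) : Function.Surjective (hfun a b) :=
  (continuous_hfun ha b).surjective (tendsto_hfun_atTop ha hb) (tendsto_hfun_atBot ha hb)

lemma hfun_gfun (ha : 0 ≤ a) (hb : 0 < b) (s : ℝ) : hfun a b (gfun a b s) = s :=
  Function.rightInverse_invFun (surjective_hfun ha hb) s

lemma hfun_le_iff (ha : 0 ≤ a) (hb : 0 < b) {z s : ℝ} : hfun a b z ≤ s ↔ z ≤ gfun a b s := by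
  rw [← (strictMono_hfun ha hb).le_iff_le (b := gfun a b s), hfun_gfun ha hb]

lemma lt_gfun_iff (ha : 0 ≤ a) (hb : 0 < b) {z s : ℝ} : z < gfun a b s ↔ hfun a b z < s := by
  rw [← (strictMono_hfun ha hb).lt_iff_lt (a := z), hfun_gfun ha hb]

lemma hfun_lt_self (ha : 0 < a) (b : ℝ) {ξ : ℝ} (hξ : 0 < ξ) : hfun a b ξ < ξ :=
  div_lt_self hξ (lt_add_of_pos_right 1 (by positivity))

lemma lt_gfun (ha : 0 < a) (hb : 0 < b) {s : ℝ} (hs : 0 < s) : s < gfun a b s :=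
  (lt_gfun_iff ha.le hb).mpr (hfun_lt_self ha b hs)

end Shrinkage

section SymmetricMeasure

variable {G : Type*} [AddCommGroup G] [LinearOrder G] [IsOrderedAddMonoid G] [TopologicalSpace G]
  [OrderClosedTopology G] [MeasurableSpace G] [OpensMeasurableSpace G] [MeasurableNeg G]
  {μ : Measure G} [IsProbabilityMeasure μ] [μ.IsNegInvariant]

lemma measure_Iio_zero_eq_half (h_zero : μ {0} = 0) : μ (Set.Iio 0) = 1 / 2 := by
  have h_symm : μ (Set.Ici 0) = μ (Set.Iio 0) := by
    rw [← measure_congr (Ioi_ae_eq_Ici' h_zero), ← Measure.measure_preimage_neg μ (Set.Iio 0)]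
    simp
  have h_total : μ (Set.Iio 0) + μ (Set.Ici 0) = 1 := by
    rw [← Set.compl_Iio, prob_add_prob_compl measurableSet_Iio]
  rw [ENNReal.eq_div_iff two_ne_zero ofNat_ne_top, two_mul]
  rwa [h_symm] at h_total

lemma measure_Iic_eq_half_add_measure_Icc (h_zero : μ {0} = 0) {x : G} (hx : 0 ≤ x) :
    μ (Set.Iic x) = 1 / 2 + μ (Set.Icc 0 x) := by
  have h_disj : Disjoint (Set.Iio 0) (Set.Icc 0 x) :=
    Set.disjoint_left.mpr fun _ hlt hmem => hmem.1.not_gt hlt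
  rw [← Set.Iio_union_Icc_eq_Iic hx, measure_union h_disj measurableSet_Icc,
    measure_Iio_zero_eq_half h_zero]

end SymmetricMeasure

lemma strictMono_measure_Iic {X : Type*} [LinearOrder X] [DenselyOrdered X] [TopologicalSpace X]
    [OrderClosedTopology X] [MeasurableSpace X] [OpensMeasurableSpace X] (μ : Measure X)
    [IsFiniteMeasure μ] [μ.IsOpenPosMeasure] : StrictMono fun x => μ (Set.Iic x) := by
  intro x y hxy
  have h_pos : 0 < μ (Set.Ioc x y) :=
    (isOpen_Ioo.measure_pos μ (Set.nonempty_Ioo.mpr hxy)).trans_le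
      (measure_mono Set.Ioo_subset_Ioc_self)
  calc μ (Set.Iic x) < μ (Set.Iic x) + μ (Set.Ioc x y) :=
        ENNReal.lt_add_right (measure_ne_top μ _) h_pos.ne'
    _ = μ (Set.Iic y) := by
        rw [← measure_union (Set.Iic_disjoint_Ioc le_rfl) measurableSet_Ioc,
          Set.Iic_union_Ioc_eq_Iic hxy.le]

section Gaussian

open ProbabilityTheory

instance isNegInvariant_gaussianReal_zero (v : ℝ≥0) : (gaussianReal 0 v).IsNegInvariant :=
  ⟨gaussianReal_map_neg.trans (by rw [neg_zero])⟩

lemma isOpenPosMeasure_gaussianReal (m : ℝ) {v : ℝ≥0} (hv : v ≠ 0) :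
    (gaussianReal m v).IsOpenPosMeasure :=
  (gaussianReal_absolutelyContinuous' m hv).isOpenPosMeasure

end Gaussian

theorem statement14_general (μ : Measure ℝ) [IsProbabilityMeasure μ] [μ.IsNegInvariant]
    [μ.IsOpenPosMeasure] (h_zero : μ {0} = 0) {a b s : ℝ} (ha : 0 < a) (hb : 0 < b) (hs : 0 < s) :
    μ {z | hfun a b z ≤ s} = 1 / 2 + μ {z | 0 ≤ z ∧ z ≤ gfun a b s} ∧
      μ {z | z ≤ s} < μ {z | hfun a b z ≤ s} := by
  have hsg : s < gfun a b s := lt_gfun ha hb hs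
  simp only [hfun_le_iff ha.le hb]
  exact ⟨measure_Iic_eq_half_add_measure_Icc h_zero (hs.trans hsg).le,
    strictMono_measure_Iic μ hsg⟩

/-- for `Z ~ N(0,σ²)` and `s > 0`,
`P([1 + exp(2α)exp(−αZ²/σ²)]⁻¹ Z ≤ s) = 1/2 + P(0 ≤ Z ≤ g(s)) > P(Z ≤ s)`. -/
theorem statement14 (σ α : ℝ) (hσ : 0 < σ) (hα : 0 < α) (s : ℝ) (hs : 0 < s) :
    (ProbabilityTheory.gaussianReal 0 (Real.toNNReal (σ ^ 2)))
        {z | (1 + Real.exp (2 * α) * Real.exp (-α * z ^ 2 / σ ^ 2))⁻¹ * z ≤ s} =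
      1 / 2 + (ProbabilityTheory.gaussianReal 0 (Real.toNNReal (σ ^ 2)))
        {z | 0 ≤ z ∧ z ≤ gfun (Real.exp (2 * α)) (σ ^ 2 / α) s} ∧
    (ProbabilityTheory.gaussianReal 0 (Real.toNNReal (σ ^ 2))) {z | z ≤ s} <
      (ProbabilityTheory.gaussianReal 0 (Real.toNNReal (σ ^ 2)))
        {z | (1 + Real.exp (2 * α) * Real.exp (-α * z ^ 2 / σ ^ 2))⁻¹ * z ≤ s} := by
  have hv : Real.toNNReal (σ ^ 2) ≠ 0 := (Real.toNNReal_pos.mpr (by positivity)).ne'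
  have := ProbabilityTheory.nullSingletonClass_gaussianReal (μ := 0) hv
  have := isOpenPosMeasure_gaussianReal 0 hv
  simp only [inv_one_add_mul_exp_mul_eq_hfun]
  exact statement14_general _ (measure_singleton 0) (exp_pos _) (by positivity) hs

end
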